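/- Assume the abc-conjecture. Let P ∈ ℤ[T] be a separable polynomial of degree N ≥ 5 with leading coefficient a_N, and let g = ⌊(N−1)/2⌋ be the genus of the hyperelliptic curve y² = P(t) (so g ≥ 2). Then for every ε > 0 and every sufficiently large x, the number of squarefree integers d ∉ {0,1} with |d| ≤ x such that the twisted hyperelliptic curve y² = d·P(t) has a non-trivial ℚ-rational point — i.e., either there exist t, y ∈ ℚ with y ≠ 0 and y² = d·P(t), or N is even and d·a_N is a nonzero square in ℚ — is at most x^{1/(g−1) + ε}. -/

import Mathlib

/-!
A nonzero `f ∈ ℚ[X]` with `r` distinct complex roots is called good (`Good`) if, for every `ε > 0`,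
the radical of `den t · num (f t)` is `≫ ht t ^ (r - 1 - ε)` for all rational `t` with `f t ≠ 0`.
The abc-conjecture is the goodness of `X (X - 1)` (`good_base`). It implies that every nonzero `f`
is good (`good_all`), by an argument of Elkies and Langevin based on Belyi maps.

* Goodness passes from `g` to any `f` dividing a power of `g` (`good_of_dvd`).
* Goodness of `q` pulls back to `q ∘ φ` when the critical values of the polynomial map `φ` are
  roots of `q` (`good_comp`). This uses `ht (φ t) ≫ ht t ^ deg φ` (`ht_eval_ge`) and a count of
  the distinct roots of `q ∘ φ` in the style of Riemann–Hurwitz (`natDegree_radical_comp`).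
* Belyi's two steps reduce an arbitrary `f` to `X (X - 1)`. Mapping by a polynomial `h` sends its
  roots to `0` and replaces the irrational points by the critical values of `h`, which are roots
  of a polynomial of smaller degree (`exists_critical_value_poly`, `good_mul_prod`). A map
  `(X - α) ^ m (X - γ) ^ n` lowers the number of points once they are all rational
  (`good_prod`).

Now let `t` be the abscissa of a non-trivial affine point on the twist of `y² = P(t)` by `d`, and
let `W` be the value at `(num t, den t)` of the form of degree `2 g + 2` attached to `P`. Then
`W = d w ^ 2`, hence `rad W ^ 2 ≤ |d W| ≪ |d| ht t ^ (2 g + 2)`, whereas goodness of `P` gives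
`rad W ≫ ht t ^ (2 g - ε)`. Therefore `ht t ^ (2 (g - 1 - ε)) ≪ |d|` (`ht_le_of_point`). Since `t`
determines `d` (`sqfInt_unique`) and there are `O(Y)` rational numbers with `ht t ^ 2 ≤ Y`
(`ncard_ht_le`), affine points occur for at most `O(x ^ (1 / (g - 1 - ε)))` values of `d`. Points
at infinity account for at most one more.
-/

open Polynomial

/-- The radical of a natural number: the product of its distinct prime factors. -/
def radNat (m : ℕ) : ℕ := ∏ p ∈ m.primeFactors, p

/-- The abc-conjecture. -/
def ABCConjecture : Prop :=
  ∀ ε : ℝ, 0 < ε → ∃ K : ℝ, 0 < K ∧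
    ∀ a b c : ℕ, 0 < a → 0 < b → 0 < c → Nat.Coprime a b → a + b = c →
      (c : ℝ) ≤ K * (radNat (a * b * c) : ℝ) ^ ((1 : ℝ) + ε)

/-- `d` is a squarefree integer with `d ∉ {0,1}`. -/
def SqfInt (d : ℤ) : Prop :=
  d ≠ 0 ∧ d ≠ 1 ∧ ∀ p : ℕ, p.Prime → ¬ ((p : ℤ) ^ 2 ∣ d)

/-! ### Heights of values of polynomials -/

/-- The naive height of a rational number. -/
def ht (t : ℚ) : ℕ := max t.num.natAbs t.den

lemma ht_pos (t : ℚ) : 1 ≤ ht t := le_max_of_le_right t.pos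

lemma ht_cast (t : ℚ) : (ht t : ℚ) = max |t| 1 * t.den := by
  have hd : (0 : ℚ) < t.den := by exact_mod_cast t.pos
  rw [max_mul_of_nonneg _ _ hd.le, one_mul, ht, Nat.cast_max]
  congr 1
  rw [Nat.cast_natAbs, Int.cast_abs]
  conv_rhs => rw [← abs_of_pos hd, ← abs_mul, Rat.mul_den_eq_num]

/-- The value at `(u, v)` of the homogenization of `F` in degree exactly `F.natDegree`. -/
def homEval (F : ℤ[X]) (u v : ℤ) : ℤ :=
  ∑ i ∈ Finset.range (F.natDegree + 1), F.coeff i * u ^ i * v ^ (F.natDegree - i)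

lemma homEval_cast (F : ℤ[X]) (t : ℚ) :
    (homEval F t.num t.den : ℚ) = (t.den : ℚ) ^ F.natDegree * aeval t F := by
  have hd : (t.den : ℚ) ≠ 0 := by exact_mod_cast t.pos.ne'
  rw [homEval, aeval_eq_sum_range, Finset.mul_sum]
  push_cast
  refine Finset.sum_congr rfl fun i hi => ?_
  have hi' : i ≤ F.natDegree := by simpa [Nat.lt_succ_iff] using hi
  obtain ⟨k, hk⟩ := Nat.exists_eq_add_of_le hi'
  rw [hk, Nat.add_sub_cancel_left, pow_add, zsmul_eq_mul, ← Rat.mul_den_eq_num t, mul_pow]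
  ring

lemma exists_int_multiple (f : ℚ[X]) :
    ∃ B : ℕ, 0 < B ∧ ∃ F : ℤ[X], F.natDegree = f.natDegree ∧
      ∀ t : ℚ, aeval t F = B * f.eval t := by
  obtain ⟨b, hbm, hb⟩ := IsLocalization.integerNormalization_spec (nonZeroDivisors ℤ) f
  set G := IsLocalization.integerNormalization (nonZeroDivisors ℤ) f
  have hb0 : b ≠ 0 := nonZeroDivisors.ne_zero hbm
  have hG : G.map (algebraMap ℤ ℚ) = C (b : ℚ) * f := by
    rw [hb, ← smul_eq_C_mul]
    ext i
    simp
  refine ⟨b.natAbs, Int.natAbs_pos.mpr hb0, C b.sign * G, ?_, fun t => ?_⟩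
  · rw [natDegree_C_mul (by simp [hb0]),
      ← natDegree_map_eq_of_injective (f := algebraMap ℤ ℚ) Int.cast_injective, hG,
      natDegree_C_mul (by exact_mod_cast hb0)]
  · have : aeval t G = (b : ℚ) * f.eval t := by
      rw [← eval_map_algebraMap, hG]; simp
    rw [map_mul, this, aeval_C]
    have h : (b.sign * b : ℤ) = b.natAbs := by
      rw [Int.sign_mul_self_eq_natAbs]
    have h' : ((b.sign : ℚ) * (b : ℚ)) = ((b.natAbs : ℕ) : ℚ) := by
      rw [← Int.cast_mul, h, Int.cast_natCast]
    rw [← h']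
    simp [mul_assoc]

/-- The denominator of a value of a rational polynomial divides a fixed multiple of a power of the
denominator of the argument. -/
lemma den_eval_dvd (f : ℚ[X]) :
    ∃ B : ℕ, 0 < B ∧ ∀ t : ℚ, (f.eval t).den ∣ B * t.den ^ f.natDegree := by
  obtain ⟨B, hB, F, hF, h⟩ := exists_int_multiple f
  refine ⟨B, hB, fun t => ?_⟩
  have h1 := homEval_cast F t
  rw [h, hF] at h1
  have h2 : f.eval t = Rat.divInt (homEval F t.num t.den) ((B * t.den ^ f.natDegree : ℕ) : ℤ) := by
    have hd : (t.den : ℚ) ≠ 0 := by exact_mod_cast t.pos.ne'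
    have hB' : (B : ℚ) ≠ 0 := by exact_mod_cast hB.ne'
    rw [Rat.divInt_eq_div, h1]
    push_cast
    field_simp
  rw [h2]
  exact Int.natCast_dvd_natCast.mp (Rat.den_dvd _ _)

lemma abs_eval_le (f : ℚ[X]) :
    ∃ K : ℚ, 0 < K ∧ ∀ t : ℚ, ∀ n, f.natDegree ≤ n → |f.eval t| ≤ K * max |t| 1 ^ n := by
  refine ⟨1 + ∑ i ∈ Finset.range (f.natDegree + 1), |f.coeff i|, by positivity, fun t n hn => ?_⟩
  have h1 : (1 : ℚ) ≤ max |t| 1 := le_max_right _ _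
  calc |f.eval t| ≤ ∑ i ∈ Finset.range (f.natDegree + 1), |f.coeff i * t ^ i| := by
        rw [eval_eq_sum_range]; exact Finset.abs_sum_le_sum_abs _ _
    _ ≤ ∑ i ∈ Finset.range (f.natDegree + 1), |f.coeff i| * max |t| 1 ^ n := by
        refine Finset.sum_le_sum fun i hi => ?_
        rw [abs_mul, abs_pow]
        gcongr
        calc |t| ^ i ≤ max |t| 1 ^ i := by gcongr; exact le_max_left _ _
          _ ≤ _ := pow_le_pow_right₀ h1 (by simp at hi; omega)
    _ ≤ _ := by
        rw [← Finset.sum_mul]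
        gcongr
        linarith

lemma num_eval_le (f : ℚ[X]) :
    ∃ K : ℚ, 0 < K ∧ ∀ t : ℚ, ((f.eval t).num.natAbs : ℚ) ≤ K * (ht t : ℚ) ^ f.natDegree := by
  obtain ⟨B, hB, h⟩ := den_eval_dvd f
  obtain ⟨K, hK, h'⟩ := abs_eval_le f
  refine ⟨K * B, by positivity, fun t => ?_⟩
  have hd := Nat.le_of_dvd (by have := t.pos; positivity) (h t)
  have hd' : ((f.eval t).den : ℚ) ≤ B * t.den ^ f.natDegree := by exact_mod_cast hd
  have e : ((f.eval t).num.natAbs : ℚ) = |f.eval t| * (f.eval t).den := by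
    rw [Nat.cast_natAbs, Int.cast_abs, ← Rat.mul_den_eq_num (f.eval t), abs_mul, Nat.abs_cast]
  rw [e, ht_cast, mul_pow]
  calc _ ≤ (K * max |t| 1 ^ f.natDegree) * (B * t.den ^ f.natDegree) := by
        gcongr
        exact h' t _ le_rfl
    _ = _ := by ring

/-- The archimedean part of the lower bound for the height of `f t`: for large `|t|` the leading
term dominates. -/
lemma pow_le_abs_eval (f : ℚ[X]) (hf : f ≠ 0) :
    ∃ K : ℚ, 0 < K ∧ ∀ t : ℚ, max |t| 1 ^ f.natDegree ≤ K * max |f.eval t| 1 := by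
  obtain ⟨K, hK, h⟩ := abs_eval_le f.eraseLead
  set a := f.leadingCoeff with ha
  have ha0 : 0 < |a| := abs_pos.mpr (leadingCoeff_ne_zero.mpr hf)
  set D := f.natDegree with hD
  rcases Nat.eq_zero_or_pos D with h0 | hpos
  · exact ⟨1, one_pos, fun t => by rw [h0]; simp⟩
  set M := max 1 (2 * K / |a|)
  have hM1 : 1 ≤ M := le_max_left _ _
  have hM2 : 2 * K ≤ M * |a| := by
    rw [← div_le_iff₀ ha0]; exact le_max_right _ _
  refine ⟨M ^ D + 2 / |a|, by positivity, fun t => ?_⟩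
  set m := max |t| 1 with hm
  have hm1 : 1 ≤ m := le_max_right _ _
  set y := max |f.eval t| 1 with hy
  have hy1 : 1 ≤ y := le_max_right _ _
  have hyf : |f.eval t| ≤ y := le_max_left _ _
  rcases le_total m M with hmM | hmM
  · calc m ^ D ≤ M ^ D * 1 := by rw [mul_one]; gcongr
      _ ≤ (M ^ D + 2 / |a|) * y := by
        gcongr
        have : 0 < 2 / |a| := by positivity
        linarith
  · by_cases htm : m = |t|
    · have hl : f.eval t = f.eraseLead.eval t + a * t ^ D := by
        have := congrArg (eval t) f.eraseLead_add_monomial_natDegree_leadingCoeff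
        rw [eval_add, eval_monomial] at this
        exact this.symm
      have h1 := h t (D - 1) f.eraseLead_natDegree_le
      rw [← hm] at h1
      have h2 : |a| * m ^ D ≤ |f.eval t| + K * m ^ (D - 1) := by
        have : |a| * m ^ D = |f.eval t - f.eraseLead.eval t| := by
          rw [hl, add_sub_cancel_left, abs_mul, abs_pow, htm]
        rw [this]
        exact (abs_sub _ _).trans (by linarith)
      have h3 : m ^ D = m * m ^ (D - 1) := by
        rw [← pow_succ', Nat.sub_add_cancel hpos]
      have h4 : 2 * K * m ^ (D - 1) ≤ |a| * m ^ D := by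
        rw [h3, ← mul_assoc]
        refine mul_le_mul_of_nonneg_right ?_ (by positivity)
        nlinarith
      have h5 : |a| * m ^ D ≤ 2 * y := by linarith
      have h6 : m ^ D ≤ 2 / |a| * y := by
        rw [div_mul_eq_mul_div, le_div_iff₀ ha0]; linarith
      have : 0 ≤ M ^ D * y := by positivity
      linarith
    · have : m = 1 := by
        rcases max_choice |t| 1 with h | h
        · exact absurd h htm
        · exact h
      have h7 : M = 1 := le_antisymm (by linarith) hM1
      rw [this, h7, one_pow]
      have : 0 < 2 / |a| := by positivity
      nlinarith

/-- The non-archimedean part of the lower bound for the height of `f t`. Write `f t` as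
`F(u, v) / (B v ^ D)` with `t = u / v` in lowest terms and `F` an integral form of degree `D`. The
cancellation in this fraction is bounded, because the greatest common divisor of `F(u, v)` and
`B v ^ D` divides `B a ^ D`, with `a` the leading coefficient of `F`. -/
lemma den_pow_le (f : ℚ[X]) (hf : f ≠ 0) :
    ∃ K : ℕ, 0 < K ∧ ∀ t : ℚ, t.den ^ f.natDegree ≤ K * (f.eval t).den := by
  obtain ⟨B, hB, F, hF, h⟩ := exists_int_multiple f
  set a := F.leadingCoeff with ha
  have hF0 : F ≠ 0 := by
    rintro rfl
    apply hf
    refine funext fun t => ?_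
    have := h t
    have hB' : (B : ℚ) ≠ 0 := by exact_mod_cast hB.ne'
    simpa [hB'] using this.symm
  have ha0 : a ≠ 0 := leadingCoeff_ne_zero.mpr hF0
  set D := f.natDegree with hD
  refine ⟨a.natAbs ^ D, by positivity, fun t => ?_⟩
  have hd : (t.den : ℚ) ≠ 0 := by exact_mod_cast t.pos.ne'
  have h1 := homEval_cast F t
  rw [h, hF] at h1
  set n := homEval F t.num t.den with hn
  have hfe : f.eval t = (n : ℚ) / ((B * t.den ^ D : ℕ) : ℤ) := by
    have hB' : (B : ℚ) ≠ 0 := by exact_mod_cast hB.ne'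
    rw [h1]
    push_cast
    field_simp
  have hBv : ((B * t.den ^ D : ℕ) : ℤ) ≠ 0 := by
    have := t.pos
    positivity
  obtain ⟨g, hg1, hg2⟩ := Rat.num_den_mk (q := f.eval t) hBv
    (by rw [hfe, Rat.divInt_eq_div])
  -- modulo `v`, the form `F(u, v)` reduces to its leading term `a u ^ D`
  obtain ⟨w, hw⟩ : ∃ w : ℤ, n = a * t.num ^ D + t.den * w := by
    rw [hn, homEval, Finset.sum_range_succ, Nat.sub_self, pow_zero, mul_one, hF]
    have : (t.den : ℤ) ∣ ∑ i ∈ Finset.range D, F.coeff i * t.num ^ i * (t.den : ℤ) ^ (D - i) := by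
      refine Finset.dvd_sum fun i hi => ?_
      exact Dvd.dvd.mul_left (dvd_pow_self _ (by simp at hi; omega)) _
    obtain ⟨w, hw⟩ := this
    refine ⟨w, ?_⟩
    rw [hw, ha, leadingCoeff, hF, add_comm]
  have hgn : g ∣ n := ⟨_, hg1⟩
  have hgB : g ∣ B * (t.den : ℤ) ^ D := ⟨_, by rw [← hg2]; push_cast; rfl⟩
  have hk1 : g ∣ B * a ^ D * t.num ^ (D * D) := by
    have e : (B : ℤ) * a ^ D * t.num ^ (D * D) = B * (n - t.den * w) ^ D := by
      rw [hw, add_sub_cancel_right, mul_pow, ← pow_mul]; ring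
    rw [e]
    have e2 : n ∣ (n - t.den * w) ^ D - (-(t.den * w)) ^ D := by
      have := sub_dvd_pow_sub_pow (n - t.den * w) (-(t.den * w)) D
      simpa using this
    have e3 : (B : ℤ) * (n - t.den * w) ^ D = B * ((n - t.den * w) ^ D - (-(t.den * w)) ^ D)
        + B * t.den ^ D * (-w) ^ D := by
      rw [← mul_neg, mul_pow]; ring
    rw [e3]
    exact dvd_add (Dvd.dvd.mul_left (hgn.trans e2) _) (Dvd.dvd.mul_right hgB _)
  have hk2 : g ∣ B * a ^ D * (t.den : ℤ) ^ D := by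
    have : (B : ℤ) * a ^ D * (t.den : ℤ) ^ D = B * (t.den : ℤ) ^ D * a ^ D := by ring
    rw [this]; exact Dvd.dvd.mul_right hgB _
  have hcop : IsCoprime (t.num ^ (D * D)) ((t.den : ℤ) ^ D) :=
    (Rat.isCoprime_num_den t).pow
  have hk : g ∣ B * a ^ D := by
    obtain ⟨x, y, hxy⟩ := hcop
    have : (B : ℤ) * a ^ D = x * (B * a ^ D * t.num ^ (D * D)) + y * (B * a ^ D * (t.den : ℤ) ^ D) := by
      linear_combination (-(B : ℤ) * a ^ D) * hxy
    rw [this]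
    exact dvd_add (Dvd.dvd.mul_left hk1 _) (Dvd.dvd.mul_left hk2 _)
  have hgle : g.natAbs ≤ B * a.natAbs ^ D := by
    have := Int.natAbs_dvd_natAbs.mpr hk
    rw [Int.natAbs_mul, Int.natAbs_pow, Int.natAbs_natCast] at this
    exact Nat.le_of_dvd (by positivity) this
  have hfin : B * t.den ^ D = g.natAbs * (f.eval t).den := by
    have := congrArg Int.natAbs hg2
    rwa [Int.natAbs_mul, Int.natAbs_natCast, Int.natAbs_natCast] at this
  refine Nat.le_of_mul_le_mul_left (c := B) ?_ hB
  rw [hfin, ← mul_assoc]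
  gcongr

/-- A polynomial map of degree `D` raises heights to the power `D`, up to a constant; this is the
lower bound. -/
lemma ht_eval_ge (f : ℚ[X]) (hf : f ≠ 0) :
    ∃ K : ℚ, 0 < K ∧ ∀ t : ℚ, (ht t : ℚ) ^ f.natDegree ≤ K * ht (f.eval t) := by
  obtain ⟨K₁, hK₁, h₁⟩ := pow_le_abs_eval f hf
  obtain ⟨K₂, hK₂, h₂⟩ := den_pow_le f hf
  refine ⟨K₁ * K₂, by positivity, fun t => ?_⟩
  have h₂' : (t.den : ℚ) ^ f.natDegree ≤ K₂ * (f.eval t).den := by exact_mod_cast h₂ t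
  rw [ht_cast, ht_cast, mul_pow]
  calc _ ≤ (K₁ * max |f.eval t| 1) * (K₂ * (f.eval t).den) := by
        gcongr
        exact h₁ t
    _ = _ := by ring

/-! ### Radicals and good polynomials -/

open UniqueFactorizationMonoid in
/-- The abc-type lower bound for the form `Y · f(X, Y)`: at a rational number `t` with `f t ≠ 0`,
the radical of the product of the denominator of `t` and the numerator of `f t` is at least of the
order of `ht t ^ (r - 1 - ε)`, where `r` is the number of distinct complex roots of `f`, written as
the degree of the radical of `f`. -/
def Good (f : ℚ[X]) : Prop :=
  ∀ ε : ℝ, 0 < ε → ∃ c : ℝ, 0 < c ∧ ∀ t : ℚ, f.eval t ≠ 0 →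
    c * (ht t : ℝ) ^ (((radical f).natDegree : ℝ) - 1 - ε) ≤
      radNat (t.den * (f.eval t).num.natAbs)

lemma radNat_pos (n : ℕ) : 1 ≤ radNat n :=
  Finset.prod_pos fun _ hp => (Nat.prime_of_mem_primeFactors hp).pos

lemma radNat_le_self {n : ℕ} (hn : n ≠ 0) : radNat n ≤ n :=
  Nat.le_of_dvd (Nat.pos_of_ne_zero hn) (Nat.prod_primeFactors_dvd n)

lemma radNat_le_of_prime {m n : ℕ} (hn : n ≠ 0) (h : ∀ p : ℕ, p.Prime → p ∣ m → p ∣ n) :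
    radNat m ≤ radNat n := by
  refine Finset.prod_le_prod_of_subset_of_one_le' (fun p hp => ?_) fun p hp _ =>
    (Nat.prime_of_mem_primeFactors hp).one_le
  exact Nat.mem_primeFactors.mpr ⟨Nat.prime_of_mem_primeFactors hp,
    h p (Nat.prime_of_mem_primeFactors hp) (Nat.dvd_of_mem_primeFactors hp), hn⟩

lemma radNat_mul_le (m n : ℕ) : radNat (m * n) ≤ radNat m * radNat n := by
  rcases eq_or_ne m 0 with rfl | hm
  · have := radNat_pos n
    simpa [radNat] using this
  rcases eq_or_ne n 0 with rfl | hn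
  · have := radNat_pos m
    simpa [radNat] using this
  unfold radNat
  rw [Nat.primeFactors_mul hm hn, ← Finset.prod_union_inter]
  refine Nat.le_mul_of_pos_right _ (Finset.prod_pos fun p hp => ?_)
  exact (Nat.prime_of_mem_primeFactors (Finset.mem_inter.mp hp).1).pos

/-- A prime in the numerator of one factor of a rational product survives in the product unless
it is cancelled by the denominator of the other factor. -/
lemma prime_dvd_num {a b c : ℚ} (h : a * b = c) {p : ℕ} (hp : p.Prime)
    (ha : p ∣ a.num.natAbs) : p ∣ c.num.natAbs ∨ p ∣ b.den := by
  have e : a.num * b.num * c.den = c.num * (a.den * b.den) := by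
    have := h
    rw [← Rat.num_div_den a, ← Rat.num_div_den b, ← Rat.num_div_den c] at this
    have h1 : (a.den : ℚ) ≠ 0 := by exact_mod_cast a.pos.ne'
    have h2 : (b.den : ℚ) ≠ 0 := by exact_mod_cast b.pos.ne'
    have h3 : (c.den : ℚ) ≠ 0 := by exact_mod_cast c.pos.ne'
    field_simp at this
    exact_mod_cast (by linear_combination this : (a.num : ℚ) * b.num * c.den = c.num * (a.den * b.den))
  have e' := congrArg Int.natAbs e
  simp only [Int.natAbs_mul, Int.natAbs_natCast] at e'
  have h1 : p ∣ c.num.natAbs * (a.den * b.den) := by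
    rw [← e', mul_assoc]; exact ha.mul_right _
  rcases hp.dvd_mul.mp h1 with h1 | h1
  · exact Or.inl h1
  rcases hp.dvd_mul.mp h1 with h1 | h1
  · exact absurd (Nat.dvd_gcd ha h1) (by rw [a.reduced]; exact hp.one_lt.ne' ∘ Nat.dvd_one.mp)
  · exact Or.inr h1

lemma prime_dvd_num_mul {a b : ℚ} {p : ℕ} (hp : p.Prime)
    (h : p ∣ (a * b).num.natAbs) : p ∣ a.num.natAbs ∨ p ∣ b.num.natAbs := by
  rw [← hp.dvd_mul, ← Int.natAbs_mul, Rat.num_mul_num_eq_num_mul_gcd, Int.natAbs_mul]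
  exact h.mul_right _

lemma prime_dvd_num_pow {a : ℚ} {p : ℕ} (hp : p.Prime) {k : ℕ}
    (h : p ∣ (a ^ k).num.natAbs) : p ∣ a.num.natAbs := by
  rw [Rat.num_pow, Int.natAbs_pow] at h
  exact hp.dvd_of_dvd_pow h

lemma prime_dvd_den_eval (f : ℚ[X]) : ∃ B : ℕ, 0 < B ∧ ∀ (t : ℚ) (p : ℕ), p.Prime →
    p ∣ (f.eval t).den → p ∣ B ∨ p ∣ t.den := by
  obtain ⟨B, hB, h⟩ := den_eval_dvd f
  refine ⟨B, hB, fun t p hp hd => ?_⟩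
  rcases hp.dvd_mul.mp (hd.trans (h t)) with h | h
  · exact Or.inl h
  · exact Or.inr (hp.dvd_of_dvd_pow h)

open UniqueFactorizationMonoid in
/-- Goodness passes from `g` to any `f` whose roots are roots of `g`. If
`radical g = radical f * e`, then `e` contributes at most `O(ht t ^ deg e)` to the
radical at `t`; the finitely many rational zeros of `g`
are absorbed in the constant. -/
lemma good_of_dvd {f g : ℚ[X]} (hg : g ≠ 0) {k : ℕ} (hdvd : f ∣ g ^ k)
    (h : Good g) : Good f := by
  have hf : f ≠ 0 := ne_zero_of_dvd_ne_zero (pow_ne_zero k hg) hdvd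
  intro ε hε
  obtain ⟨c, hc, hcb⟩ := h ε hε
  have hsg : radical f ∣ radical g :=
    (dvd_radical_iff isRadical_radical hg).mpr ((exists_dvd_pow_iff_radical_dvd hf).mp ⟨k, hdvd⟩)
  obtain ⟨e, he⟩ := hsg
  obtain ⟨l, h₁, hh₁⟩ := exists_dvd_radical_self_pow hg
  obtain ⟨h₂, hh₂⟩ := radical_dvd_self (a := f)
  obtain ⟨h₃, hh₃⟩ := radical_dvd_self (a := g)
  obtain ⟨B₁, hB₁, hB₁p⟩ := prime_dvd_den_eval h₁
  obtain ⟨B₂, hB₂, hB₂p⟩ := prime_dvd_den_eval h₂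
  obtain ⟨K, hK, hKe⟩ := num_eval_le e
  have hdeg : (radical g).natDegree = (radical f).natDegree + e.natDegree := by
    rw [he, natDegree_mul radical_ne_zero]
    rintro rfl
    exact radical_ne_zero (a := g) (by rw [he, mul_zero])
  set r : ℝ := ((radical f).natDegree : ℝ) - 1 - ε with hr
  have hKR : (0 : ℝ) < K := by exact_mod_cast hK
  set S : ℝ := 1 + ∑ t ∈ g.roots.toFinset, (ht t : ℝ) ^ r with hS
  have hSpos : 0 < S := by positivity
  refine ⟨min (c / (B₁ * B₂ * K)) (1 / S), by positivity, fun t hft => ?_⟩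
  have hH : (1 : ℝ) ≤ ht t := by exact_mod_cast ht_pos t
  have hH0 : (0 : ℝ) < ht t := by linarith
  by_cases hgt : g.eval t = 0
  · have h1 : (1 : ℝ) ≤ radNat (t.den * (f.eval t).num.natAbs) := by exact_mod_cast radNat_pos _
    refine le_trans ?_ h1
    have h2 : (ht t : ℝ) ^ r ≤ S := by
      have : (ht t : ℝ) ^ r ≤ ∑ t ∈ g.roots.toFinset, (ht t : ℝ) ^ r :=
        Finset.single_le_sum (f := fun t : ℚ => (ht t : ℝ) ^ r) (fun i _ => by positivity)
          (by simp [hg, hgt])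
      linarith
    calc _ ≤ 1 / S * S := by
          gcongr
          exact min_le_right _ _
      _ = 1 := by field_simp
  · have h1 := hcb t hgt
    have e1 : g.eval t * h₁.eval t = ((radical f).eval t * e.eval t) ^ l := by
      rw [← eval_mul, ← eval_mul, ← eval_pow, ← hh₁, he]
    have e2 : (radical f).eval t * h₂.eval t = f.eval t := by
      rw [← eval_mul, ← hh₂]
    have het : e.eval t ≠ 0 := by
      intro h0
      apply hgt
      rw [hh₃, he, eval_mul, eval_mul, h0]; ring
    have hnum : (e.eval t).num.natAbs ≠ 0 := by simpa using het
    have hnumf : (f.eval t).num.natAbs ≠ 0 := by simpa using hft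
    have h2 : radNat (t.den * (g.eval t).num.natAbs) ≤
        B₁ * B₂ * (e.eval t).num.natAbs * radNat (t.den * (f.eval t).num.natAbs) := by
      calc _ ≤ radNat (B₁ * B₂ * (e.eval t).num.natAbs * (t.den * (f.eval t).num.natAbs)) := by
            refine radNat_le_of_prime ?_ fun p hp hpd => ?_
            · have := t.pos
              positivity
            · rcases hp.dvd_mul.mp hpd with hpd | hpd
              · exact (hpd.mul_right _).mul_left _
              rcases prime_dvd_num e1 hp hpd with hpd | hpd
              · rcases prime_dvd_num_mul hp (prime_dvd_num_pow hp hpd) with hpd | hpd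
                · rcases prime_dvd_num e2 hp hpd with hpd | hpd
                  · exact (hpd.mul_left _).mul_left _
                  · rcases hB₂p t p hp hpd with hpd | hpd
                    · exact ((hpd.mul_left _).mul_right _).mul_right _
                    · exact (hpd.mul_right _).mul_left _
                · exact (hpd.mul_left _).mul_right _
              · rcases hB₁p t p hp hpd with hpd | hpd
                · exact ((hpd.mul_right _).mul_right _).mul_right _
                · exact (hpd.mul_right _).mul_left _
        _ ≤ _ := (radNat_mul_le _ _).trans
              (Nat.mul_le_mul_right _ (radNat_le_self (by positivity)))
    have h3 : ((e.eval t).num.natAbs : ℝ) ≤ K * (ht t : ℝ) ^ e.natDegree := by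
      exact_mod_cast hKe t
    have h4 : (radNat (t.den * (g.eval t).num.natAbs) : ℝ) ≤
        B₁ * B₂ * (K * (ht t : ℝ) ^ e.natDegree) * radNat (t.den * (f.eval t).num.natAbs) := by
      calc _ ≤ ((B₁ * B₂ * (e.eval t).num.natAbs *
                radNat (t.den * (f.eval t).num.natAbs) : ℕ) : ℝ) := by exact_mod_cast h2
        _ ≤ _ := by push_cast; gcongr
    have h5 : (ht t : ℝ) ^ (((radical g).natDegree : ℝ) - 1 - ε) =
        (ht t : ℝ) ^ r * (ht t : ℝ) ^ e.natDegree := by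
      rw [← Real.rpow_natCast, ← Real.rpow_add hH0, hdeg, hr]
      push_cast
      ring_nf
    rw [h5] at h1
    have hpe : 0 < (ht t : ℝ) ^ e.natDegree := by positivity
    have h6 : c * (ht t : ℝ) ^ r ≤
        B₁ * B₂ * K * radNat (t.den * (f.eval t).num.natAbs) := by
      refine le_of_mul_le_mul_right ?_ hpe
      linarith
    calc _ ≤ c / (B₁ * B₂ * K) * (ht t : ℝ) ^ r := by
          gcongr
          exact min_le_left _ _
      _ ≤ _ := by
          rw [div_mul_eq_mul_div, div_le_iff₀ (by positivity)]
          linarith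

open UniqueFactorizationMonoid in
/-- The inequality form of Riemann–Hurwitz for a polynomial map `φ` whose critical points all lie in
the zero set of `q ∘ φ`: the fibres over the roots of `q` have at most
`deg φ · r(q) - (deg φ - 1)` points in total. -/
lemma natDegree_radical_comp {q φ : ℚ[X]} (hq : q ≠ 0) (hφ : 0 < φ.natDegree) {k : ℕ}
    (hcrit : derivative φ ∣ (q.comp φ) ^ k) :
    (radical (q.comp φ)).natDegree + (derivative φ).natDegree ≤
      φ.natDegree * (radical q).natDegree := by
  have hcomp0 : ∀ p : ℚ[X], p ≠ 0 → p.comp φ ≠ 0 := fun p hp h => by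
    rcases comp_eq_zero_iff.mp h with h | ⟨_, h⟩
    · exact hp h
    · rw [h, natDegree_C] at hφ; exact hφ.false
  set f := q.comp φ with hf
  have hf0 : f ≠ 0 := hcomp0 q hq
  set f₀ := (radical q).comp φ with hf₀
  have hf₀0 : f₀ ≠ 0 := hcomp0 _ radical_ne_zero
  obtain ⟨l, hl⟩ := exists_dvd_radical_self_pow hq
  have hfl : f ∣ f₀ ^ l := by
    obtain ⟨w, hw⟩ := hl
    exact ⟨w.comp φ, by rw [hf, hf₀, ← pow_comp, ← mul_comp, ← hw]⟩
  have hsf : radical f ∣ f₀ := (exists_dvd_pow_iff_radical_dvd hf0).mp ⟨l, hfl⟩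
  have hφ'0 : derivative φ ≠ 0 := fun h => hφ.ne' (derivative_eq_zero.mp h)
  have hφf : derivative φ ∣ f₀ ^ (l * k) := by
    rw [pow_mul]; exact hcrit.trans (pow_dvd_pow_of_dvd hfl k)
  have hφf' : derivative φ ∣ derivative f₀ := by
    rw [hf₀, derivative_comp]; exact dvd_mul_right _ _
  let m := mapRingHom (algebraMap ℚ ℂ)
  have hm0 : ∀ p : ℚ[X], p ≠ 0 → m p ≠ 0 := fun p hp => by
    simpa [m] using hp
  have key : (m (radical f)).roots + (m (derivative φ)).roots ≤ (m f₀).roots := by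
    classical
    rw [Multiset.le_iff_count]
    intro z
    rw [Multiset.count_add, count_roots, count_roots, count_roots]
    by_cases hz : (m f₀).IsRoot z
    · have h1 : (m (radical f)).rootMultiplicity z ≤ 1 := by
        refine rootMultiplicity_le_one_of_separable ?_ z
        exact (PerfectField.separable_iff_squarefree.mpr squarefree_radical).map
      have h2 : derivative (m f₀) = m (derivative f₀) := by
        simp [m, derivative_map]
      have h3 := derivative_rootMultiplicity_of_root hz
      have hpos : 0 < (m f₀).rootMultiplicity z :=
        (rootMultiplicity_pos (hm0 _ hf₀0)).mpr hz
      have h4 : derivative (m f₀) ≠ 0 := by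
        intro h
        have hc := derivative_eq_zero.mp h
        rw [eq_C_of_natDegree_eq_zero hc] at hz
        rw [IsRoot, eval_C] at hz
        apply hm0 _ hf₀0
        rw [eq_C_of_natDegree_eq_zero hc, hz, C_0]
      have h5 : (m (derivative φ)).rootMultiplicity z ≤ (derivative (m f₀)).rootMultiplicity z :=
        rootMultiplicity_le_rootMultiplicity_of_dvd h4 (by rw [h2]; exact map_dvd m hφf') z
      omega
    · have h1 : ¬ (m (radical f)).IsRoot z := fun h => hz (h.dvd (map_dvd m hsf))
      have h2 : ¬ (m (derivative φ)).IsRoot z := fun h => by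
        have := h.dvd (map_dvd m hφf)
        rw [map_pow] at this
        rw [IsRoot, eval_pow] at this
        exact hz (eq_zero_of_pow_eq_zero this)
      rw [rootMultiplicity_eq_zero h1, rootMultiplicity_eq_zero h2]
      exact Nat.zero_le _
  have hcard : ∀ p : ℚ[X], Multiset.card (m p).roots = p.natDegree := fun p => by
    rw [← (IsAlgClosed.splits (m p)).natDegree_eq_card_roots]
    simp [m]
  have := Multiset.card_le_card key
  rw [Multiset.card_add, hcard, hcard, hcard, hf₀, natDegree_comp] at this
  rw [mul_comm]
  exact this

lemma good_of_natDegree_le_one {f : ℚ[X]}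
    (h : (UniqueFactorizationMonoid.radical f).natDegree ≤ 1) : Good f := by
  intro ε hε
  refine ⟨1, one_pos, fun t _ => ?_⟩
  have h1 : (1 : ℝ) ≤ radNat (t.den * (f.eval t).num.natAbs) := by exact_mod_cast radNat_pos _
  refine le_trans ?_ h1
  rw [one_mul]
  refine Real.rpow_le_one_of_one_le_of_nonpos (by exact_mod_cast ht_pos t) ?_
  have : ((UniqueFactorizationMonoid.radical f).natDegree : ℝ) ≤ 1 := by exact_mod_cast h
  linarith

open UniqueFactorizationMonoid in
/-- Goodness pulls back along polynomial maps `φ` whose critical values are roots of `q`. The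
radical attached to `q` at `φ t` is at most a constant times that of `q ∘ φ` at `t`, the height
`ht (φ t)` is at least of the order of
`ht t ^ deg φ`, and `natDegree_radical_comp` shows that the exponent obtained in this way is the
one required for `q ∘ φ`. -/
lemma good_comp {q φ : ℚ[X]} (hq : q ≠ 0) (hφ : 0 < φ.natDegree) {k : ℕ}
    (hcrit : derivative φ ∣ (q.comp φ) ^ k) (h : Good q) : Good (q.comp φ) := by
  intro ε hε
  have hD : (0 : ℝ) < φ.natDegree := by exact_mod_cast hφ
  have hφ0 : φ ≠ 0 := by rintro rfl; simp at hφ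
  set D := φ.natDegree with hDdef
  rcases le_or_gt (((radical (q.comp φ)).natDegree : ℝ) - 1 - ε) 0 with hneg | hpos
  · refine ⟨1, one_pos, fun t _ => ?_⟩
    have h1 : (1 : ℝ) ≤ radNat (t.den * ((q.comp φ).eval t).num.natAbs) := by
      exact_mod_cast radNat_pos _
    refine le_trans ?_ h1
    rw [one_mul]
    exact Real.rpow_le_one_of_one_le_of_nonpos (by exact_mod_cast ht_pos t) hneg
  obtain ⟨c, hc, hcb⟩ := h (ε / D) (by positivity)
  set e : ℝ := ((radical q).natDegree : ℝ) - 1 - ε / D with he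
  have hcount := natDegree_radical_comp hq hφ hcrit
  rw [natDegree_derivative, ← hDdef] at hcount
  have hle : ((radical (q.comp φ)).natDegree : ℝ) - 1 - ε ≤ D * e := by
    have h1 : (radical (q.comp φ)).natDegree + D ≤ D * (radical q).natDegree + 1 := by omega
    have h2 : ((radical (q.comp φ)).natDegree : ℝ) + D ≤ D * (radical q).natDegree + 1 := by
      exact_mod_cast h1
    have h3 : D * e = D * (radical q).natDegree - D - ε := by
      rw [he]; field_simp
    linarith
  have hepos : 0 < e := by
    have : 0 < D * e := lt_of_lt_of_le hpos hle
    exact pos_of_mul_pos_right this hD.le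
  obtain ⟨K, hK, hKb⟩ := ht_eval_ge φ hφ0
  obtain ⟨B, hB, hBp⟩ := prime_dvd_den_eval φ
  have hKR : (0 : ℝ) < K := by exact_mod_cast hK
  refine ⟨c / (B * (K : ℝ) ^ e), by positivity, fun t hft => ?_⟩
  have hH : (1 : ℝ) ≤ ht t := by exact_mod_cast ht_pos t
  rw [eval_comp] at hft ⊢
  have h1 := hcb (φ.eval t) hft
  have hnumf : (q.eval (φ.eval t)).num.natAbs ≠ 0 := by simpa using hft
  have h2 : radNat ((φ.eval t).den * (q.eval (φ.eval t)).num.natAbs) ≤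
      B * radNat (t.den * (q.eval (φ.eval t)).num.natAbs) := by
    calc _ ≤ radNat (B * (t.den * (q.eval (φ.eval t)).num.natAbs)) := by
          refine radNat_le_of_prime ?_ fun p hp hpd => ?_
          · have := t.pos
            positivity
          · rcases hp.dvd_mul.mp hpd with hpd | hpd
            · rcases hBp t p hp hpd with hpd | hpd
              · exact hpd.mul_right _
              · exact (hpd.mul_right _).mul_left _
            · exact (hpd.mul_left _).mul_left _
      _ ≤ _ := (radNat_mul_le _ _).trans
            (Nat.mul_le_mul_right _ (radNat_le_self (by positivity)))
  have h2' : (radNat ((φ.eval t).den * (q.eval (φ.eval t)).num.natAbs) : ℝ) ≤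
      B * radNat (t.den * (q.eval (φ.eval t)).num.natAbs) := by exact_mod_cast h2
  have h3 : (ht t : ℝ) ^ D ≤ K * ht (φ.eval t) := by exact_mod_cast hKb t
  have h4 : (ht t : ℝ) ^ (((radical (q.comp φ)).natDegree : ℝ) - 1 - ε) ≤
      (K : ℝ) ^ e * (ht (φ.eval t) : ℝ) ^ e := by
    calc _ ≤ (ht t : ℝ) ^ (D * e) := Real.rpow_le_rpow_of_exponent_le hH hle
      _ = ((ht t : ℝ) ^ D) ^ e := by
          rw [Real.rpow_mul (by positivity), Real.rpow_natCast]
      _ ≤ (K * ht (φ.eval t) : ℝ) ^ e := Real.rpow_le_rpow (by positivity) h3 hepos.le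
      _ = _ := Real.mul_rpow hKR.le (by positivity)
  rw [div_mul_eq_mul_div, div_le_iff₀ (by positivity)]
  calc _ ≤ c * ((K : ℝ) ^ e * (ht (φ.eval t) : ℝ) ^ e) := by gcongr
    _ = (K : ℝ) ^ e * (c * (ht (φ.eval t) : ℝ) ^ e) := by ring
    _ ≤ (K : ℝ) ^ e * (B * radNat (t.den * (q.eval (φ.eval t)).num.natAbs)) :=
        mul_le_mul_of_nonneg_left (h1.trans h2') (by positivity)
    _ = _ := by ring

/-! ### Belyi's reduction to the abc-conjecture -/

/-- The abc-conjecture for the relation between `u`, `v` and `u - v`, with `u` of either sign. -/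
lemma abc_int (habc : ABCConjecture) (δ : ℝ) (hδ : 0 < δ) : ∃ K : ℝ, 0 < K ∧
    ∀ (u : ℤ) (v : ℕ), 0 < v → u ≠ 0 → u ≠ v → Nat.Coprime u.natAbs v →
      ((max u.natAbs v : ℕ) : ℝ) ≤
        K * (radNat (u.natAbs * v * (u - v).natAbs) : ℝ) ^ (1 + δ) := by
  obtain ⟨K, hK, h⟩ := habc δ hδ
  refine ⟨K, hK, fun u v hv hu huv hc => ?_⟩
  obtain ⟨n, rfl | rfl⟩ := u.eq_nat_or_neg
  · rw [Int.natAbs_natCast] at *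
    have hn : 0 < n := by omega
    rcases lt_or_gt_of_ne (show n ≠ v by exact_mod_cast huv) with hlt | hgt
    · have e : ((n : ℤ) - v).natAbs = v - n := by omega
      have := h n (v - n) v hn (by omega) hv
        ((Nat.coprime_sub_self_right hlt.le).mpr hc) (by omega)
      rw [e, max_eq_right hlt.le]
      convert this using 5
      ring
    · have e : ((n : ℤ) - v).natAbs = n - v := by omega
      have := h v (n - v) n hv (by omega) hn
        ((Nat.coprime_sub_self_right hgt.le).mpr hc.symm) (by omega)
      rw [e, max_eq_left hgt.le]
      convert this using 5
      ring
  · rw [Int.natAbs_neg, Int.natAbs_natCast] at *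
    have hn : 0 < n := by omega
    have e : (-(n : ℤ) - v).natAbs = n + v := by omega
    have := h n v (n + v) hn hv (by omega) hc rfl
    rw [e]
    refine le_trans ?_ this
    exact_mod_cast max_le (by omega) (by omega)

open UniqueFactorizationMonoid in
/-- The abc-conjecture is the goodness of `X (X - 1)`. -/
lemma good_base (habc : ABCConjecture) : Good (X * (X - C 1)) := by
  intro ε hε
  obtain ⟨K, hK, h⟩ := abc_int habc ε hε
  refine ⟨1 / K ^ (1 / (1 + ε)), by positivity, fun t ht0 => ?_⟩
  have hH : (1 : ℝ) ≤ ht t := by exact_mod_cast ht_pos t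
  simp only [eval_mul, eval_X, eval_sub, eval_C] at ht0 ⊢
  have hd : (t.den : ℚ) ≠ 0 := by exact_mod_cast t.pos.ne'
  have htd := Rat.mul_den_eq_num t
  have hu0 : t.num ≠ 0 := by
    intro h0
    exact ht0 (by rw [Rat.num_eq_zero.mp h0]; ring)
  have huv : t.num ≠ t.den := by
    intro h0
    apply ht0
    have : t * t.den = t.den := by rw [htd, h0]; simp
    rw [mul_eq_right₀ hd] at this
    rw [this]; ring
  have h1 := h t.num t.den t.pos hu0 huv t.reduced
  set R := radNat (t.den * (t * (t - 1)).num.natAbs) with hR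
  have hR1 : 1 ≤ R := radNat_pos _
  have h2 : radNat (t.num.natAbs * t.den * (t.num - t.den).natAbs) ≤ R := by
    have hne : (t * (t - 1)).num.natAbs ≠ 0 := by simpa using ht0
    refine radNat_le_of_prime (Nat.mul_ne_zero t.pos.ne' hne) fun p hp hpd => ?_
    by_cases hpv : p ∣ t.den
    · exact hpv.mul_right _
    refine Dvd.dvd.mul_left ?_ _
    have e : ((t.num * (t.num - t.den) : ℤ) : ℚ) * (((t.den ^ 2 : ℕ) : ℚ)⁻¹) = t * (t - 1) := by
      push_cast
      rw [← htd]
      field_simp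
    have hp2 : p ∣ ((t.num * (t.num - t.den) : ℤ) : ℚ).num.natAbs := by
      rw [Rat.num_intCast, Int.natAbs_mul]
      have e2 : t.num.natAbs * t.den * (t.num - t.den).natAbs =
        t.den * (t.num.natAbs * (t.num - t.den).natAbs) := by ring
      rw [e2] at hpd
      exact (hp.dvd_mul.mp hpd).resolve_left hpv
    rcases prime_dvd_num e hp hp2 with h | h
    · exact h
    · rw [Rat.inv_natCast_den_of_pos (by have := t.pos; positivity)] at h
      exact absurd (hp.dvd_of_dvd_pow h) hpv
  have h3 : (ht t : ℝ) ≤ K * (R : ℝ) ^ (1 + ε) := by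
    refine h1.trans ?_
    gcongr
  have hdeg : ((radical ((X : ℚ[X]) * (X - C 1))).natDegree : ℝ) ≤ 2 := by
    have h0 : (X : ℚ[X]) * (X - C 1) ≠ 0 := mul_ne_zero X_ne_zero (X_sub_C_ne_zero _)
    have := natDegree_le_of_dvd radical_dvd_self h0
    rw [natDegree_mul X_ne_zero (X_sub_C_ne_zero _), natDegree_X, natDegree_X_sub_C] at this
    exact_mod_cast this
  have h4 : (ht t : ℝ) ^ (((radical ((X : ℚ[X]) * (X - C 1))).natDegree : ℝ) - 1 - ε) ≤
      K ^ (1 / (1 + ε)) * R := by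
    calc _ ≤ (ht t : ℝ) ^ (1 / (1 + ε)) := by
          refine Real.rpow_le_rpow_of_exponent_le hH ?_
          rw [le_div_iff₀ (by positivity)]
          nlinarith
      _ ≤ (K * (R : ℝ) ^ (1 + ε)) ^ (1 / (1 + ε)) :=
          Real.rpow_le_rpow (by positivity) h3 (by positivity)
      _ = _ := by
          rw [Real.mul_rpow hK.le (by positivity), ← Real.rpow_mul (by positivity),
            mul_one_div_cancel (by positivity), Real.rpow_one]
  rw [div_mul_eq_mul_div, div_le_iff₀ (by positivity)]
  linarith

lemma prod_X_sub_C_ne_zero (S : Finset ℚ) : ∏ a ∈ S, (X - C a) ≠ (0 : ℚ[X]) :=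
  Finset.prod_ne_zero_iff.mpr fun a _ => X_sub_C_ne_zero a

lemma comp_ne_zero_of_natDegree_pos {q φ : ℚ[X]} (hq : q ≠ 0) (hφ : 0 < φ.natDegree) :
    q.comp φ ≠ 0 := fun h => by
  rcases comp_eq_zero_iff.mp h with h | ⟨_, h⟩
  · exact hq h
  · rw [h, natDegree_C] at hφ; exact hφ.false

lemma X_sub_C_dvd_prod_comp {T : Finset ℚ} {φ : ℚ[X]} {a : ℚ} (ha : φ.eval a ∈ T) :
    X - C a ∣ (∏ b ∈ T, (X - C b)).comp φ := by
  rw [dvd_iff_isRoot, IsRoot, eval_comp, eval_prod]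
  exact Finset.prod_eq_zero ha (by simp)

/-- The critical points of `(X - α) ^ m (X - γ) ^ n` other than `α, γ` reduce to the weighted mean
`β` of `α` and `γ`. -/
lemma derivative_belyi {α β γ : ℚ} {m n : ℕ} (hm : 0 < m) (hn : 0 < n)
    (h : (m : ℚ) * (γ - β) = n * (β - α)) :
    derivative ((X - C α) ^ m * (X - C γ) ^ n) =
      (X - C α) ^ (m - 1) * (X - C γ) ^ (n - 1) * (C ((m : ℚ) + n) * (X - C β)) := by
  obtain ⟨m, rfl⟩ := Nat.exists_eq_succ_of_ne_zero hm.ne'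
  obtain ⟨n, rfl⟩ := Nat.exists_eq_succ_of_ne_zero hn.ne'
  have hC := congrArg C h
  simp only [derivative_mul, derivative_X_sub_C_pow, Nat.succ_eq_add_one, Nat.add_sub_cancel] at *
  simp only [map_mul, map_sub, map_add] at hC ⊢
  simp only [pow_succ]
  linear_combination (-1 : ℚ[X]) * (X - C α) ^ m * (X - C γ) ^ n * hC

/-- Belyi's second step: polynomials whose roots are all rational are good. Given three roots
`α < β < γ`, the map `(X - α) ^ m (X - γ) ^ n` with the right weights has no critical points other
than `α, β, γ`, and it identifies `α` with `γ`, so that its image has fewer points. -/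
lemma good_prod (habc : ABCConjecture) : ∀ (N : ℕ) (S : Finset ℚ), S.card ≤ N →
    Good (∏ a ∈ S, (X - C a)) := by
  intro N
  induction N with
  | zero =>
    intro S hS
    apply good_of_natDegree_le_one
    have : S = ∅ := by simpa using hS
    simp [this]
  | succ N ih =>
    intro S hS
    rcases Nat.lt_or_ge S.card 2 with h2 | h2
    · apply good_of_natDegree_le_one
      have := natDegree_le_of_dvd (UniqueFactorizationMonoid.radical_dvd_self
        (a := ∏ a ∈ S, ((X : ℚ[X]) - C a))) (prod_X_sub_C_ne_zero S)
      rw [natDegree_finsetProd_X_sub_C_eq_card] at this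
      omega
    rcases Nat.lt_or_ge S.card 3 with h3 | h3
    · obtain ⟨a, b, hab, rfl⟩ := Finset.card_eq_two.mp (show S.card = 2 by omega)
      have hba : b - a ≠ 0 := sub_ne_zero.mpr hab.symm
      set φ : ℚ[X] := C (b - a)⁻¹ * (X - C a) with hφ
      have hdeg : φ.natDegree = 1 := by
        rw [hφ, natDegree_C_mul (inv_ne_zero hba), natDegree_X_sub_C]
      have hq : (X : ℚ[X]) * (X - C 1) ≠ 0 := mul_ne_zero X_ne_zero (X_sub_C_ne_zero _)
      have hgood : Good ((X * (X - C 1) : ℚ[X]).comp φ) := by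
        refine good_comp hq (by omega) (k := 1) ?_ (good_base habc)
        have : derivative φ = C (b - a)⁻¹ := by simp [hφ]
        rw [this]
        exact (isUnit_C.mpr (inv_ne_zero hba).isUnit).dvd
      refine good_of_dvd (comp_ne_zero_of_natDegree_pos hq (by omega)) (k := 1) ?_ hgood
      rw [Finset.prod_pair hab, pow_one, mul_comp, X_comp]
      refine mul_dvd_mul (by rw [hφ]; exact dvd_mul_left _ _) ?_
      rw [dvd_iff_isRoot]
      simp [hφ, hba]
    · obtain ⟨α, β, γ, hα, hβ, hγ, hαβ, hβγ⟩ :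
          ∃ α β γ : ℚ, α ∈ S ∧ β ∈ S ∧ γ ∈ S ∧ α < β ∧ β < γ := by
        have hne : S.Nonempty := Finset.card_pos.mp (by omega)
        have hc : 0 < ((S.erase (S.min' hne)).erase (S.max' hne)).card := by
          have h1 := Finset.pred_card_le_card_erase (s := S) (a := S.min' hne)
          have h2 := Finset.pred_card_le_card_erase (s := S.erase (S.min' hne)) (a := S.max' hne)
          omega
        obtain ⟨β, hβ⟩ := Finset.card_pos.mp hc
        simp only [Finset.mem_erase] at hβ
        exact ⟨S.min' hne, β, S.max' hne, S.min'_mem _, hβ.2.2, S.max'_mem _,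
          lt_of_le_of_ne (S.min'_le _ hβ.2.2) (Ne.symm hβ.2.1),
          lt_of_le_of_ne (S.le_max' _ hβ.2.2) hβ.1⟩
      obtain ⟨m, n, hm, hn, hmn⟩ : ∃ m n : ℕ, 0 < m ∧ 0 < n ∧
          (m : ℚ) * (γ - β) = n * (β - α) := by
        set ρ : ℚ := (β - α) / (γ - β) with hρ
        have h1 : 0 < γ - β := sub_pos.mpr hβγ
        have h2 : 0 < β - α := sub_pos.mpr hαβ
        have h3 : 0 < ρ := by positivity
        have h4 : 0 < ρ.num := Rat.num_pos.mpr h3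
        refine ⟨ρ.num.natAbs, ρ.den, by omega, ρ.pos, ?_⟩
        have h5 : ((ρ.num.natAbs : ℕ) : ℚ) = ρ * ρ.den := by
          rw [Rat.mul_den_eq_num, Nat.cast_natAbs, abs_of_pos h4]
        rw [h5, hρ]
        field_simp
      set φ : ℚ[X] := (X - C α) ^ m * (X - C γ) ^ n with hφ
      have hφdeg : 0 < φ.natDegree := by
        rw [hφ, natDegree_mul (pow_ne_zero _ (X_sub_C_ne_zero _))
          (pow_ne_zero _ (X_sub_C_ne_zero _)), natDegree_pow, natDegree_X_sub_C]
        omega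
      set T := S.image (fun a => φ.eval a) with hT
      have hcard : T.card ≤ N := by
        have : T.card < S.card := by
          refine lt_of_le_of_ne Finset.card_image_le fun h => ?_
          have hinj := Finset.card_image_iff.mp h
          have : α = γ := hinj hα hγ (by simp [hφ, hm.ne', hn.ne'])
          linarith
        omega
      have hroot : ∀ a ∈ S, X - C a ∣ (∏ b ∈ T, (X - C b)).comp φ := fun a ha =>
        X_sub_C_dvd_prod_comp (Finset.mem_image_of_mem _ ha)
      have hgood : Good ((∏ b ∈ T, (X - C b)).comp φ) := by
        refine good_comp (prod_X_sub_C_ne_zero T) hφdeg (k := (m - 1) + (n - 1) + 1) ?_ (ih T hcard)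
        rw [hφ, derivative_belyi hm hn hmn, ← hφ, pow_add, pow_add, pow_one]
        refine mul_dvd_mul (mul_dvd_mul (pow_dvd_pow_of_dvd (hroot α hα) _)
          (pow_dvd_pow_of_dvd (hroot γ hγ) _)) ?_
        rw [(isUnit_C.mpr (show IsUnit ((m : ℚ) + n) from
          (by positivity : (m : ℚ) + n ≠ 0).isUnit)).mul_left_dvd]
        exact hroot β hβ
      refine good_of_dvd (comp_ne_zero_of_natDegree_pos (prod_X_sub_C_ne_zero T) hφdeg)
        (k := S.card) ?_ hgood
      rw [← Finset.prod_const]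
      exact Finset.prod_dvd_prod_of_dvd _ _ hroot

/-- The values of `h` at the critical points of `h` are roots of a nonzero rational polynomial `g`
of degree less than `deg h`: the characteristic polynomial of multiplication by `h` on the quotient
of `ℚ[X]` by the derivative of `h`. -/
lemma exists_critical_value_poly (h : ℚ[X]) (hh : 0 < h.natDegree) :
    ∃ g : ℚ[X], g ≠ 0 ∧ g.natDegree < h.natDegree ∧ derivative h ∣ g.comp h := by
  have h0 : derivative h ≠ 0 := fun h' => hh.ne' (derivative_eq_zero.mp h')
  let pb := AdjoinRoot.powerBasis h0
  have : Module.Finite ℚ (AdjoinRoot (derivative h)) := pb.finite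
  let x : AdjoinRoot (derivative h) := AdjoinRoot.mk _ h
  let L := Algebra.lmul ℚ (AdjoinRoot (derivative h)) x
  refine ⟨L.charpoly, L.charpoly_monic.ne_zero, ?_, ?_⟩
  · rw [LinearMap.charpoly_natDegree, pb.finrank, AdjoinRoot.powerBasis_dim, natDegree_derivative]
    omega
  · have h1 : aeval L L.charpoly = 0 := L.aeval_self_charpoly
    rw [aeval_algHom_apply] at h1
    have h2 : aeval x L.charpoly = 0 := by
      have := congrArg (fun l => l 1) h1
      simpa using this
    rw [← AdjoinRoot.mk_eq_zero, ← h2]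
    have h3 := aeval_algHom_apply (AdjoinRoot.mkₐ (derivative h)) h L.charpoly
    exact h3.symm

/-- Belyi's first step, by induction on the degree of the factor `h` with possibly irrational
roots: the map `h` sends all its own roots to `0`, and the only new irrational points are its
critical values, which are roots of a polynomial of smaller degree. -/
lemma good_mul_prod (habc : ABCConjecture) : ∀ (n : ℕ) (h : ℚ[X]), h ≠ 0 → h.natDegree ≤ n →
    ∀ A : Finset ℚ, Good (h * ∏ a ∈ A, (X - C a)) := by
  intro n
  induction n with
  | zero =>
    intro h h0 hdeg A
    refine good_of_dvd (prod_X_sub_C_ne_zero A) (k := 1) ?_ (good_prod habc _ A le_rfl)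
    have hu : IsUnit h := by
      rw [eq_C_of_natDegree_le_zero hdeg] at h0 ⊢
      exact isUnit_C.mpr (isUnit_iff_ne_zero.mpr (by simpa using h0))
    rw [pow_one, hu.mul_left_dvd]
  | succ n ih =>
    intro h h0 hdeg A
    rcases Nat.eq_zero_or_pos h.natDegree with hz | hpos
    · exact ih h h0 (by omega) A
    obtain ⟨g, hg0, hgdeg, hgd⟩ := exists_critical_value_poly h hpos
    set T := insert 0 (A.image (fun a => h.eval a)) with hT
    have hq0 : g * ∏ b ∈ T, (X - C b) ≠ 0 := mul_ne_zero hg0 (prod_X_sub_C_ne_zero T)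
    have hgood : Good ((g * ∏ b ∈ T, (X - C b)).comp h) := by
      refine good_comp hq0 hpos (k := 1) ?_ (ih g hg0 (by omega) T)
      rw [pow_one, mul_comp]
      exact hgd.mul_right _
    refine good_of_dvd (comp_ne_zero_of_natDegree_pos hq0 hpos) (k := 1 + A.card) ?_ hgood
    rw [pow_add, pow_one]
    refine mul_dvd_mul ?_ ?_
    · rw [mul_comp]
      refine Dvd.dvd.mul_left ?_ _
      rw [hT, ← Finset.mul_prod_erase _ _ (Finset.mem_insert_self _ _), mul_comp]
      simp
    · rw [← Finset.prod_const]
      refine Finset.prod_dvd_prod_of_dvd _ _ fun a ha => ?_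
      have hmem : h.eval a ∈ T :=
        Finset.mem_insert_of_mem (Finset.mem_image_of_mem (fun a => h.eval a) ha)
      rw [mul_comp]
      exact Dvd.dvd.mul_left (X_sub_C_dvd_prod_comp hmem) _

/-- Under the abc-conjecture every nonzero rational polynomial is good. -/
theorem good_all (habc : ABCConjecture) {f : ℚ[X]} (hf : f ≠ 0) : Good f := by
  simpa using good_mul_prod habc _ f hf le_rfl ∅

/-! ### Points on quadratic twists -/

lemma SqfInt.squarefree {d : ℤ} (hd : SqfInt d) : Squarefree d := by
  rw [← Int.squarefree_natAbs, Nat.squarefree_iff_prime_squarefree]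
  intro p hp h
  refine hd.2.2 p hp ?_
  rw [← Int.natAbs_dvd_natAbs, sq, Int.natAbs_mul, Int.natAbs_natCast]
  exact h

/-- If `d` is squarefree and `d W` is a rational square, then `W` is `d` times an integral
square. -/
lemma exists_of_mul_eq_sq {d W : ℤ} (hd : Squarefree d) {z : ℚ}
    (h : (d : ℚ) * W = z ^ 2) : ∃ w : ℤ, W = d * w ^ 2 := by
  have h1 : IsSquare ((d * W : ℤ) : ℚ) := ⟨z, by push_cast; rw [h, sq]⟩
  obtain ⟨s, hs⟩ := Rat.isSquare_intCast_iff.mp h1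
  have hds : d ∣ s := hd.isRadical 2 s ⟨W, by rw [sq, hs]⟩
  obtain ⟨w, rfl⟩ := hds
  refine ⟨w, mul_left_cancel₀ hd.ne_zero ?_⟩
  rw [hs]; ring

/-- The twist is determined by the value of the polynomial: a nonzero rational number has at most
one squarefree integer in its class modulo squares. -/
lemma sqfInt_unique {d d' : ℤ} (hd : SqfInt d) (hd' : SqfInt d') {q y y' : ℚ} (hq : q ≠ 0)
    (h : y ^ 2 = d * q) (h' : y' ^ 2 = d' * q) : d = d' := by
  have h1 : (d : ℚ) * d' = (y * y' / q) ^ 2 := by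
    rw [div_pow, mul_pow, h, h']
    field_simp
  obtain ⟨w, hw⟩ := exists_of_mul_eq_sq hd.squarefree h1
  have hu : IsUnit w := hd'.squarefree w ⟨d, by rw [hw]; ring⟩
  rcases Int.isUnit_iff.mp hu with rfl | rfl <;> simpa using hw.symm

/-- Northcott counting: there are at most `3 Y` rational numbers with `ht t ^ 2 ≤ Y`. -/
lemma ncard_ht_le (Y : ℝ) (hY : 0 ≤ Y) :
    {t : ℚ | (ht t : ℝ) ^ 2 ≤ Y}.Finite ∧ ({t : ℚ | (ht t : ℝ) ^ 2 ≤ Y}.ncard : ℝ) ≤ 3 * Y := by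
  set B : ℕ := ⌊√Y⌋₊ with hB
  have hsub : ∀ t ∈ {t : ℚ | (ht t : ℝ) ^ 2 ≤ Y}, (t.num, t.den) ∈
      ((Finset.Icc (-(B : ℤ)) B ×ˢ Finset.Icc 1 B : Finset (ℤ × ℕ)) : Set (ℤ × ℕ)) := by
    intro t h
    have h1 : ht t ≤ B := Nat.le_floor (Real.le_sqrt_of_sq_le h)
    have h2 : t.num.natAbs ≤ B := (le_max_left _ _).trans h1
    have h3 : t.den ≤ B := (le_max_right _ _).trans h1
    have h4 := t.pos
    simp only [Finset.coe_product, Set.mem_prod, Finset.coe_Icc, Set.mem_Icc]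
    omega
  have hinj : Set.InjOn (fun t : ℚ => (t.num, t.den)) {t : ℚ | (ht t : ℝ) ^ 2 ≤ Y} := by
    intro a _ b _ hab
    simp only [Prod.mk.injEq] at hab
    exact Rat.ext hab.1 hab.2
  refine ⟨Set.Finite.of_finite_image ((Finset.finite_toSet _).subset
    (Set.image_subset_iff.mpr hsub)) hinj, ?_⟩
  have h1 := Set.ncard_le_ncard_of_injOn _ hsub hinj (Finset.finite_toSet _)
  rw [Set.ncard_coe_finset, Finset.card_product, Int.card_Icc, Nat.card_Icc] at h1
  have h2 : (((B : ℤ) + 1 - -B).toNat) * (B + 1 - 1) ≤ 3 * B ^ 2 := by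
    have e : ((B : ℤ) + 1 - -B).toNat = 2 * B + 1 := by omega
    rw [e, Nat.add_sub_cancel]
    nlinarith [Nat.le_self_pow (n := 2) two_ne_zero B]
  have h3 : (B : ℝ) ^ 2 ≤ Y := by
    calc (B : ℝ) ^ 2 ≤ √Y ^ 2 := by
          gcongr
          exact Nat.floor_le (Real.sqrt_nonneg _)
      _ = Y := Real.sq_sqrt hY
  have h4 : ({t : ℚ | (ht t : ℝ) ^ 2 ≤ Y}.ncard : ℝ) ≤ 3 * (B : ℝ) ^ 2 := by
    exact_mod_cast h1.trans h2
  linarith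

open UniqueFactorizationMonoid in
/-- A rational point with abscissa `t` on the twist by `d` forces
`ht t ^ (2 (g - 1 - ε)) ≪ |d|`: with `W` the value of the associated form of degree `2 g + 2`, one
has `W = d w ^ 2`, so that `rad W ^ 2 ≤ |d W|`, while goodness bounds `rad W` from below by
`ht t ^ (2 g - ε)`. -/
lemma ht_le_of_point (habc : ABCConjecture) (P : ℤ[X]) (g : ℕ)
    (hg : P.natDegree = 2 * g + 1 ∨ P.natDegree = 2 * g + 2)
    (hsep : (P.map (Int.castRingHom ℚ)).Separable) (ε : ℝ) (hε : 0 < ε) :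
    ∃ K : ℝ, 0 < K ∧ ∀ (d : ℤ) (t y : ℚ), SqfInt d → y ≠ 0 → y ^ 2 = d * aeval t P →
      (ht t : ℝ) ^ (2 * ((g : ℝ) - 1 - ε)) ≤ K * |(d : ℝ)| := by
  set f := P.map (Int.castRingHom ℚ) with hf
  have hf0 : f ≠ 0 := hsep.ne_zero
  have hfdeg : f.natDegree = P.natDegree :=
    natDegree_map_eq_of_injective Int.cast_injective P
  have hfe : ∀ t : ℚ, f.eval t = aeval t P := fun t => eval_map_algebraMap P t
  have hrdeg : P.natDegree ≤ (radical f).natDegree := by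
    rw [← hfdeg]
    exact natDegree_le_of_dvd (hsep.squarefree.isRadical.dvd_radical hf0) radical_ne_zero
  obtain ⟨c, hc, hcb⟩ := good_all habc hf0 ε hε
  obtain ⟨K, hK, hKb⟩ := abs_eval_le f
  have hKR : (0 : ℝ) < K := by exact_mod_cast hK
  refine ⟨K / c ^ 2, by positivity, fun d t y hd hy hyd => ?_⟩
  have hH : (1 : ℝ) ≤ ht t := by exact_mod_cast ht_pos t
  have hH0 : (0 : ℝ) < ht t := by linarith
  have hPt : aeval t P ≠ 0 := by
    intro h0
    rw [h0, mul_zero] at hyd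
    exact hy (pow_eq_zero_iff two_ne_zero |>.mp hyd)
  have hd0 : d ≠ 0 := hd.1
  have hv : (t.den : ℚ) ≠ 0 := by exact_mod_cast t.pos.ne'
  set W : ℤ := (t.den : ℤ) ^ (2 * g + 2 - P.natDegree) * homEval P t.num t.den with hW
  have hWc : (W : ℚ) = (t.den : ℚ) ^ (2 * g + 2) * aeval t P := by
    rw [hW]
    push_cast
    rw [homEval_cast, ← mul_assoc, ← pow_add]
    congr 2
    omega
  have hW0 : W ≠ 0 := by
    intro h0
    rw [h0, Int.cast_zero] at hWc
    exact mul_ne_zero (pow_ne_zero _ hv) hPt hWc.symm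
  obtain ⟨w, hw⟩ := exists_of_mul_eq_sq (d := d) (W := W) (z := (t.den : ℚ) ^ (g + 1) * y)
    hd.squarefree (by rw [hWc, mul_pow, hyd]; ring)
  have hw0 : w ≠ 0 := by rintro rfl; exact hW0 (by rw [hw]; ring)
  have hradW : radNat W.natAbs ≤ d.natAbs * w.natAbs := by
    have hne : d.natAbs * w.natAbs ≠ 0 := by positivity
    refine (radNat_le_of_prime hne fun p hp hpd => ?_).trans (radNat_le_self hne)
    rw [hw, Int.natAbs_mul, Int.natAbs_pow] at hpd
    rcases hp.dvd_mul.mp hpd with h | h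
    · exact h.mul_right _
    · exact (hp.dvd_of_dvd_pow h).mul_left _
  have hradW2 : (radNat W.natAbs : ℝ) ^ 2 ≤ |(d : ℝ)| * |(W : ℝ)| := by
    have h1 : (radNat W.natAbs : ℝ) ≤ |(d : ℝ)| * |(w : ℝ)| := by
      have : (radNat W.natAbs : ℝ) ≤ ((d.natAbs * w.natAbs : ℕ) : ℝ) := by exact_mod_cast hradW
      simpa [Nat.cast_natAbs] using this
    calc _ ≤ (|(d : ℝ)| * |(w : ℝ)|) ^ 2 := by gcongr
      _ = _ := by
        rw [hw]; push_cast; rw [abs_mul, abs_pow]; ring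
  have hWle : |(W : ℝ)| ≤ K * (ht t : ℝ) ^ (2 * g + 2) := by
    have h1 : |(W : ℚ)| ≤ K * (ht t : ℚ) ^ (2 * g + 2) := by
      rw [hWc, abs_mul, abs_pow, Nat.abs_cast, ht_cast, mul_pow, ← hfe]
      have := hKb t (2 * g + 2) (by omega)
      calc _ ≤ (t.den : ℚ) ^ (2 * g + 2) * (K * max |t| 1 ^ (2 * g + 2)) := by gcongr
        _ = _ := by ring
    exact_mod_cast h1
  -- In odd degree `W` already contains the factor `t.den` that appears in `Good`; in even degree
  -- that factor costs at most `ht t`, which offsets the extra root of `f`.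
  have hcomp : (radNat (t.den * (f.eval t).num.natAbs) : ℝ) ≤
      (ht t : ℝ) ^ (P.natDegree - 1 - 2 * g) * radNat W.natAbs := by
    have hpW : ∀ p : ℕ, p.Prime → p ∣ (f.eval t).num.natAbs → p ∣ W.natAbs := by
      intro p hp hpd
      have e : f.eval t * ((t.den ^ (2 * g + 2) : ℕ) : ℚ) = ((W : ℤ) : ℚ) := by
        rw [hWc, hfe]; push_cast; ring
      rcases prime_dvd_num e hp hpd with h | h
      · simpa using h
      · rw [Rat.den_natCast] at h
        exact absurd (Nat.dvd_one.mp h) hp.one_lt.ne'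
    have hWn : W.natAbs ≠ 0 := Int.natAbs_ne_zero.mpr hW0
    rcases hg with hg | hg
    · have hdvd : t.den ∣ W.natAbs := by
        rw [hW, Int.natAbs_mul, hg, show 2 * g + 2 - (2 * g + 1) = 1 by omega, pow_one,
          Int.natAbs_natCast]
        exact dvd_mul_right _ _
      rw [hg, show 2 * g + 1 - 1 - 2 * g = 0 by omega, pow_zero, one_mul]
      have : radNat (t.den * (f.eval t).num.natAbs) ≤ radNat W.natAbs := by
        refine radNat_le_of_prime hWn fun p hp hpd => ?_
        rcases hp.dvd_mul.mp hpd with h | h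
        · exact h.trans hdvd
        · exact hpW p hp h
      exact_mod_cast this
    · rw [hg, show 2 * g + 2 - 1 - 2 * g = 1 by omega, pow_one]
      have : radNat (t.den * (f.eval t).num.natAbs) ≤ ht t * radNat W.natAbs := by
        calc _ ≤ radNat (t.den * W.natAbs) := by
              refine radNat_le_of_prime (mul_ne_zero t.pos.ne' hWn) fun p hp hpd => ?_
              rcases hp.dvd_mul.mp hpd with h | h
              · exact h.mul_right _
              · exact (hpW p hp h).mul_left _
          _ ≤ radNat t.den * radNat W.natAbs := radNat_mul_le _ _
          _ ≤ _ := Nat.mul_le_mul_right _ ((radNat_le_self t.pos.ne').trans (le_max_right _ _))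
      exact_mod_cast this
  have h1 := (hcb t (by rw [hfe]; exact hPt)).trans hcomp
  have h2 : c * (ht t : ℝ) ^ (2 * (g : ℝ) - ε) ≤ radNat W.natAbs := by
    have hpe : 0 < (ht t : ℝ) ^ (P.natDegree - 1 - 2 * g) := by positivity
    refine le_of_mul_le_mul_left ?_ hpe
    refine le_trans ?_ h1
    rw [mul_left_comm]
    refine mul_le_mul_of_nonneg_left ?_ hc.le
    rw [← Real.rpow_natCast, ← Real.rpow_add hH0]
    refine Real.rpow_le_rpow_of_exponent_le hH ?_
    have e1 : P.natDegree - 1 - 2 * g + 2 * g + 1 ≤ (radical f).natDegree := by omega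
    have e2 : ((P.natDegree - 1 - 2 * g : ℕ) : ℝ) + 2 * g + 1 ≤ (radical f).natDegree := by
      exact_mod_cast e1
    linarith
  have h3 : c ^ 2 * (ht t : ℝ) ^ (2 * (2 * (g : ℝ) - ε)) ≤
      |(d : ℝ)| * (K * (ht t : ℝ) ^ (2 * g + 2)) := by
    calc _ = (c * (ht t : ℝ) ^ (2 * (g : ℝ) - ε)) ^ 2 := by
          rw [mul_pow, mul_comm (2 : ℝ) (2 * (g : ℝ) - ε), Real.rpow_mul hH0.le]
          norm_num
      _ ≤ (radNat W.natAbs : ℝ) ^ 2 := by gcongr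
      _ ≤ |(d : ℝ)| * |(W : ℝ)| := hradW2
      _ ≤ _ := by gcongr
  have h4 : (ht t : ℝ) ^ (2 * (2 * (g : ℝ) - ε)) =
      (ht t : ℝ) ^ (2 * ((g : ℝ) - 1 - ε)) * (ht t : ℝ) ^ (2 * g + 2) := by
    rw [← Real.rpow_natCast, ← Real.rpow_add hH0]
    congr 1
    push_cast
    ring
  rw [h4] at h3
  have hpe : 0 < (ht t : ℝ) ^ (2 * g + 2) := by positivity
  rw [div_mul_eq_mul_div, le_div_iff₀ (by positivity)]
  refine le_of_mul_le_mul_right ?_ hpe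
  linarith

theorem stmt3 (habc : ABCConjecture) (N : ℕ) (hN : 5 ≤ N) (P : Polynomial ℤ)
    (hdeg : P.natDegree = N) (hP0 : P ≠ 0)
    (hsep : (P.map (Int.castRingHom ℚ)).Separable) :
    ∀ ε : ℝ, 0 < ε → ∃ x₀ : ℕ, ∀ x : ℕ, x₀ ≤ x →
      ({d : ℤ | SqfInt d ∧ |d| ≤ (x : ℤ) ∧
          ((∃ t y : ℚ, y ≠ 0 ∧ y ^ 2 = (d : ℚ) * Polynomial.aeval t P) ∨
           (Even N ∧ ∃ y : ℚ, y ≠ 0 ∧ (d : ℚ) * (P.leadingCoeff : ℚ) = y ^ 2))}.ncard : ℝ)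
        ≤ (x : ℝ) ^ ((1 : ℝ) / ((((N - 1) / 2 : ℕ) : ℝ) - 1) + ε) := by
  intro ε hε
  set g := (N - 1) / 2 with hg
  have hg2 : (2 : ℝ) ≤ g := by exact_mod_cast (show 2 ≤ g by omega)
  set η : ℝ := 1 / ((g : ℝ) - 1) + ε with hη
  have hG : (0 : ℝ) < (g : ℝ) - 1 := by linarith
  have hη0 : 0 < η := by positivity
  have hηG : 1 / η < (g : ℝ) - 1 := by
    rw [one_div_lt hη0 hG, hη]
    linarith
  -- any `κ` strictly between `1 / η` and `g - 1` serves; take the midpoint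
  set κ : ℝ := (1 / η + ((g : ℝ) - 1)) / 2 with hκ
  have hη' : 0 < 1 / η := by positivity
  have hκ0 : 0 < κ := by linarith
  have hκη : 1 / κ < η := by
    rw [one_div_lt hκ0 hη0]; linarith
  obtain ⟨K, hK, hKb⟩ := ht_le_of_point habc P g (by omega) hsep ((g : ℝ) - 1 - κ)
    (by linarith)
  set θ : ℝ := 1 / κ with hθ
  have hθ0 : 0 < θ := by positivity
  have htend : Filter.Tendsto (fun x : ℕ => (x : ℝ) ^ (η - θ)) Filter.atTop Filter.atTop :=
    (tendsto_rpow_atTop (by linarith)).comp tendsto_natCast_atTop_atTop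
  obtain ⟨x₀, hx₀⟩ := Filter.eventually_atTop.mp
    (htend.eventually_ge_atTop (3 * K ^ θ + 1))
  refine ⟨max x₀ 1, fun x hx => ?_⟩
  have hx1 : (1 : ℝ) ≤ x := by exact_mod_cast (le_max_right _ _).trans hx
  have hx2 := hx₀ x ((le_max_left _ _).trans hx)
  set Y : ℝ := (K * x) ^ θ with hY
  have hY0 : 0 ≤ Y := by positivity
  obtain ⟨hTfin, hTcard⟩ := ncard_ht_le Y hY0
  set D₁ : Set ℤ := {d : ℤ | SqfInt d ∧ |d| ≤ (x : ℤ) ∧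
    ∃ t y : ℚ, y ≠ 0 ∧ y ^ 2 = (d : ℚ) * aeval t P} with hD₁
  set D₂ : Set ℤ := {d : ℤ | SqfInt d ∧ ∃ y : ℚ, y ^ 2 = (d : ℚ) * (P.leadingCoeff : ℚ)} with hD₂
  have hD₂s : D₂.Subsingleton := by
    rintro d ⟨hd, y, hy⟩ d' ⟨hd', y', hy'⟩
    exact sqfInt_unique hd hd' (by exact_mod_cast leadingCoeff_ne_zero.mpr hP0) hy hy'
  have hD₁f : D₁.Finite := by
    refine (Set.finite_Icc (-(x : ℤ)) x).subset fun d hd => ?_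
    exact abs_le.mp hd.2.1
  have hD₁c : (D₁.ncard : ℝ) ≤ 3 * Y := by
    choose! τ ω hω using fun (d : ℤ) (hd : d ∈ D₁) => hd.2.2
    refine le_trans ?_ hTcard
    have : D₁.ncard ≤ {t : ℚ | (ht t : ℝ) ^ 2 ≤ Y}.ncard := by
      refine Set.ncard_le_ncard_of_injOn τ (fun d hd => ?_) (fun d hd d' hd' hdd => ?_) hTfin
      · have h1 := hKb d (τ d) (ω d) hd.1 (hω d hd).1 (hω d hd).2
        have hH : (1 : ℝ) ≤ ht (τ d) := by exact_mod_cast ht_pos _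
        have h2 : |(d : ℝ)| ≤ x := by exact_mod_cast hd.2.1
        have h3 : (ht (τ d) : ℝ) ^ (2 * κ) ≤ K * x := by
          have e : (2 : ℝ) * ((g : ℝ) - 1 - ((g : ℝ) - 1 - κ)) = 2 * κ := by ring
          rw [e] at h1
          exact h1.trans (by gcongr)
        have h4 := Real.rpow_le_rpow (by positivity) h3 hθ0.le
        rw [← Real.rpow_mul (by positivity), hθ, mul_assoc, mul_one_div_cancel hκ0.ne',
          mul_one] at h4
        rw [Set.mem_ofPred_eq, ← Real.rpow_natCast]
        exact_mod_cast h4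
      · have hq : aeval (τ d) P ≠ 0 := by
          intro h0
          have := (hω d hd).2
          rw [h0, mul_zero] at this
          exact (hω d hd).1 (pow_eq_zero_iff two_ne_zero |>.mp this)
        exact sqfInt_unique hd.1 hd'.1 hq (hω d hd).2 (by rw [hdd]; exact (hω d' hd').2)
    exact_mod_cast this
  have hsub : {d : ℤ | SqfInt d ∧ |d| ≤ (x : ℤ) ∧
          ((∃ t y : ℚ, y ≠ 0 ∧ y ^ 2 = (d : ℚ) * Polynomial.aeval t P) ∨
           (Even N ∧ ∃ y : ℚ, y ≠ 0 ∧ (d : ℚ) * (P.leadingCoeff : ℚ) = y ^ 2))} ⊆ D₁ ∪ D₂ := by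
    rintro d ⟨hd, hdx, h | ⟨_, y, _, hy⟩⟩
    · exact Or.inl ⟨hd, hdx, h⟩
    · exact Or.inr ⟨hd, y, hy.symm⟩
  have hcard : ({d : ℤ | SqfInt d ∧ |d| ≤ (x : ℤ) ∧
          ((∃ t y : ℚ, y ≠ 0 ∧ y ^ 2 = (d : ℚ) * Polynomial.aeval t P) ∨
           (Even N ∧ ∃ y : ℚ, y ≠ 0 ∧ (d : ℚ) * (P.leadingCoeff : ℚ) = y ^ 2))}.ncard : ℝ) ≤
      D₁.ncard + 1 := by
    have h1 := Set.ncard_le_ncard hsub (hD₁f.union hD₂s.finite)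
    have h2 := Set.ncard_union_le D₁ D₂
    have h3 : D₂.ncard ≤ 1 := (Set.ncard_le_one hD₂s.finite).mpr fun a ha b hb => hD₂s ha hb
    have h4 := (h1.trans h2).trans (Nat.add_le_add_left h3 _)
    rw [← Nat.cast_succ]
    exact Nat.cast_le.mpr h4
  have hYe : Y = K ^ θ * (x : ℝ) ^ θ := Real.mul_rpow hK.le (by positivity)
  have hxθ : 1 ≤ (x : ℝ) ^ θ := Real.one_le_rpow hx1 hθ0.le
  have hsplit : (x : ℝ) ^ η = (x : ℝ) ^ θ * (x : ℝ) ^ (η - θ) := by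
    rw [← Real.rpow_add (by linarith)]
    congr 1
    ring
  calc _ ≤ 3 * Y + 1 := by linarith
    _ ≤ (x : ℝ) ^ θ * (3 * K ^ θ + 1) := by
        rw [hYe]; linarith
    _ ≤ (x : ℝ) ^ η := by
        rw [hsplit]
        gcongr
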